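/- arXiv:1904.08583 — 2 statements merged into one kernel-verified Lean document; each statement's English description precedes it below -/
import Mathlib

section
/- If G is a 2-connected graph on n vertices, then md(G) ≤ ⌊n/2⌋. -/
/-!
Write `G - i` for the graph obtained by deleting all edges of color `i`. In an MD-coloring the
endpoints of an edge of color `i` lie in different components of `G - i`, as no other color can
separate them (`isMDColoring.not_reachable_of_adj`).

The proof grows a vertex set `S` ear by ear, starting from a single edge, together with a set `C`
of colors such that `2 * #C ≤ #S` and, for every `i ∉ C`, all of `S` lies in one component of
`G - i` (`IsEarStage`). If `S` is not everything, 2-connectedness gives an ear `a, x, …, b` with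
`a ≠ b` in `S` and inner vertices outside `S` (`exists_ear`). An ear of `m + 1` edges adds `m`
vertices. A color `i ∉ C` cannot occur exactly once on the ear, since then `a` and `b` would be
separated in `G - i`. So every new color occurs at least twice. Moreover some color separates `a`
from `b`; it belongs to `C` and occurs on the ear, so at most `m` edges of the ear have new colors.
Hence at most `m / 2` new colors appear, and the invariant survives (`IsEarStage.extend`).

Once `S` is the whole vertex set, each color outside `C` leaves `G - i` connected and therefore
labels no edge, so at most `#C ≤ n / 2` colors are used.
-/

/-- An MD-coloring: an edge-coloring such that every pair of distinct vertices is
separated by a monochromatic edge-cut (equivalently, by some color class). -/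
def isMDColoring {V : Type*} (G : SimpleGraph V) (c : Sym2 V → ℕ) : Prop :=
  ∀ u v : V, u ≠ v → ∃ i : ℕ, ¬ (G.deleteEdges {e | c e = i}).Reachable u v

/-- The monochromatic disconnection number: the maximum number of colors used on
edges over all MD-colorings. -/
noncomputable def mdNum {V : Type*} (G : SimpleGraph V) : ℕ :=
  sSup {n | ∃ c : Sym2 V → ℕ, isMDColoring G c ∧ (c '' G.edgeSet).ncard = n}

section

variable {V : Type*} {G : SimpleGraph V} {c : Sym2 V → ℕ}

theorem isMDColoring.not_reachable_of_adj (hc : isMDColoring G c) {u v : V} (h : G.Adj u v) :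
    ¬ (G.deleteEdges {e | c e = c s(u, v)}).Reachable u v := by
  obtain ⟨i, hi⟩ := hc u v h.ne
  by_cases hci : c s(u, v) = i
  · rwa [hci]
  · exact absurd (SimpleGraph.Adj.reachable (by simp [SimpleGraph.deleteEdges_adj, h, hci])) hi

theorem reachable_of_notMem {i : ℕ} {u v : V} (p : G.Walk u v) (hi : i ∉ p.edges.map c) :
    (G.deleteEdges {e | c e = i}).Reachable u v := by
  induction p with
  | nil => rfl
  | @cons u w v h p ih =>
    simp only [SimpleGraph.Walk.edges_cons, List.map_cons, List.mem_cons, not_or] at hi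
    refine SimpleGraph.Reachable.trans (SimpleGraph.Adj.reachable ?_) (ih hi.2)
    simp [SimpleGraph.deleteEdges_adj, h, Ne.symm hi.1]

/-- In an MD-coloring, the single edge of color `i` on the walk is the only place where the walk
changes its component of `G - i`. -/
theorem isMDColoring.not_reachable_of_count_eq_one (hc : isMDColoring G c) {i : ℕ} {u v : V}
    (p : G.Walk u v) (hi : (p.edges.map c).count i = 1) :
    ¬ (G.deleteEdges {e | c e = i}).Reachable u v := by
  induction p with
  | nil => simp at hi
  | @cons u w v h p ih =>
    simp only [SimpleGraph.Walk.edges_cons, List.map_cons] at hi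
    intro hr
    by_cases hci : c s(u, w) = i
    · subst hci
      rw [List.count_cons_self, Nat.add_eq_right, List.count_eq_zero] at hi
      exact hc.not_reachable_of_adj h (hr.trans (reachable_of_notMem p hi).symm)
    · rw [List.count_cons_of_ne hci] at hi
      refine ih hi (SimpleGraph.Reachable.trans (SimpleGraph.Adj.reachable ?_) hr)
      simp [SimpleGraph.deleteEdges_adj, h.symm, Sym2.eq_swap, hci]

theorem exists_walk_first_hit (S : Set V) {a u v : V} (q : G.Walk u v) (hv : v ∈ S)
    (ha : a ∉ q.support) :
    ∃ b ∈ S, ∃ p : G.Walk u b, a ∉ p.support ∧ ∀ w ∈ p.support, w ∈ S → w = b := by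
  induction q with
  | nil => exact ⟨_, hv, .nil, ha, by simp⟩
  | @cons u w v h q ih =>
    simp only [SimpleGraph.Walk.support_cons, List.mem_cons, not_or] at ha
    by_cases hu : u ∈ S
    · exact ⟨u, hu, .nil, by simpa using ha.1, by simp⟩
    · obtain ⟨b, hb, p, hap, hp⟩ := ih hv ha.2
      refine ⟨b, hb, .cons h p, by simp [ha.1, hap], ?_⟩
      rintro z hz hzS
      rw [SimpleGraph.Walk.support_cons, List.mem_cons] at hz
      rcases hz with rfl | hz
      · exact absurd hzS hu
      · exact hp z hz hzS

/-- The ear consists of the edge `ax` followed by the path `p` from `x` to `b`. -/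
theorem exists_ear (hG : G.Connected) (h2 : ∀ v : V, (G.induce ({v}ᶜ : Set V)).Connected)
    {S : Set V} (hS : S.Nontrivial) (hne : S ≠ Set.univ) :
    ∃ a ∈ S, ∃ x, x ∉ S ∧ G.Adj a x ∧ ∃ b ∈ S, a ≠ b ∧ ∃ p : G.Walk x b, p.IsPath ∧
      ∀ w ∈ p.support, w ∈ S → w = b := by
  classical
  obtain ⟨y, hy⟩ := (Set.ne_univ_iff_exists_notMem S).1 hne
  obtain ⟨s, hs⟩ := hS.nonempty
  obtain ⟨w⟩ := hG.preconnected s y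
  obtain ⟨d, -, hd1, hd2⟩ := w.exists_boundary_dart S hs hy
  obtain ⟨t, ht, hta⟩ := hS.exists_ne d.fst
  have hxa : d.snd ≠ d.fst := d.adj.ne'
  obtain ⟨q⟩ := (h2 d.fst).preconnected ⟨d.snd, hxa⟩ ⟨t, hta⟩
  have hq : d.fst ∉ (q.map (SimpleGraph.Embedding.induce _).toHom).support := by
    rw [SimpleGraph.Walk.support_map, List.mem_map]
    rintro ⟨z, -, hz⟩
    exact z.2 hz
  obtain ⟨b, hb, p, hap, hp⟩ := exists_walk_first_hit S _ ht hq
  refine ⟨d.fst, hd1, d.snd, hd2, d.adj, b, hb, ?_, p.bypass, p.bypass_isPath,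
    fun w hw => hp w (p.support_bypass_subset_support hw)⟩
  rintro h
  exact hap (h ▸ p.end_mem_support)

/-- The invariant of the ear-by-ear construction: `S` has at least two vertices, `C` has at most
half as many colors, and deleting all edges of a color outside `C` does not disconnect vertices
of `S` from each other. -/
structure IsEarStage (G : SimpleGraph V) (c : Sym2 V → ℕ) (S : Finset V) (C : Finset ℕ) :
    Prop where
  two_le : 2 ≤ S.card
  card_le : 2 * C.card ≤ S.card
  reachable : ∀ i ∉ C, ∀ u ∈ S, ∀ v ∈ S, (G.deleteEdges {e | c e = i}).Reachable u v

/-- Double counting: the members of `T` each occupy two places of `L`, and `j` occupies another. -/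
theorem two_mul_card_lt_length {L : List ℕ} {T : Finset ℕ} {j : ℕ}
    (hT : ∀ i ∈ T, 2 ≤ L.count i) (hj : j ∈ L) (hjT : j ∉ T) : 2 * T.card < L.length := by
  have h1 : ∑ i ∈ insert j T, L.count i ≤ L.length := by
    have := Multiset.toFinset_sum_count_eq (L : Multiset ℕ)
    simp only [Multiset.coe_count, Multiset.coe_card] at this
    rw [← this]
    refine Finset.sum_le_sum_of_ne_zero fun i _ hi => ?_
    rw [Multiset.mem_toFinset, Multiset.mem_coe]
    exact List.count_pos_iff.1 (Nat.pos_of_ne_zero hi)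
  rw [Finset.sum_insert hjT] at h1
  have h2 : T.card • 2 ≤ ∑ i ∈ T, L.count i := Finset.card_nsmul_le_sum _ _ _ hT
  have h3 : 0 < L.count j := List.count_pos_iff.2 hj
  rw [smul_eq_mul] at h2
  omega

theorem IsEarStage.extend (hc : isMDColoring G c) (hG : G.Connected)
    (h2 : ∀ v : V, (G.induce ({v}ᶜ : Set V)).Connected) {S : Finset V} {C : Finset ℕ}
    (h : IsEarStage G c S C) (hne : (S : Set V) ≠ Set.univ) :
    ∃ S' C', S.card < S'.card ∧ IsEarStage G c S' C' := by
  classical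
  obtain ⟨a, ha, x, hx, hax, b, hb, hab, p, hp, hpS⟩ := exists_ear hG h2
    (Finset.one_lt_card_iff_nontrivial.1 h.two_le) hne
  simp only [Finset.mem_coe] at ha hx hb hpS
  set q : G.Walk a b := .cons hax p with hq
  set L := q.edges.map c with hL
  set T := L.toFinset \ C with hT
  have hlen : L.length = p.length + 1 := by simp [hL, hq]
  have hcount : ∀ i ∈ T, 2 ≤ L.count i := by
    intro i hi
    rw [hT, Finset.mem_sdiff, List.mem_toFinset] at hi
    have h0 : 0 < L.count i := List.count_pos_iff.2 hi.1
    have h1 : L.count i ≠ 1 := fun h1 =>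
      hc.not_reachable_of_count_eq_one q h1 (h.reachable i hi.2 a ha b hb)
    omega
  obtain ⟨j, hj⟩ := hc a b hab
  have hjL : j ∈ L := by
    by_contra hjL
    exact hj (reachable_of_notMem q hjL)
  have hjC : j ∈ C := by
    by_contra hjC
    exact hj (h.reachable j hjC a ha b hb)
  have hTcard := two_mul_card_lt_length hcount hjL (by simp [hT, hjC])
  have hinter : S ∩ p.support.toFinset = {b} := by
    ext w
    simp only [Finset.mem_inter, List.mem_toFinset, Finset.mem_singleton]
    constructor
    · rintro ⟨hw, hw'⟩
      exact hpS w hw' hw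
    · rintro rfl
      exact ⟨hb, p.end_mem_support⟩
  have hcard : (S ∪ p.support.toFinset).card = S.card + p.length := by
    have h3 := Finset.card_union_add_card_inter S p.support.toFinset
    rw [hinter, Finset.card_singleton, List.toFinset_card_of_nodup hp.support_nodup,
      SimpleGraph.Walk.length_support] at h3
    omega
  have hpos : 0 < p.length := by
    rw [Nat.pos_iff_ne_zero]
    intro h0
    exact hx (SimpleGraph.Walk.eq_of_length_eq_zero h0 ▸ hb)
  refine ⟨S ∪ p.support.toFinset, C ∪ T, by omega, by have := h.two_le; omega, ?_, ?_⟩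
  · have := Finset.card_union_le C T
    have := h.card_le
    omega
  · intro i hi
    have hiC : i ∉ C := fun hh => hi (Finset.mem_union_left _ hh)
    have hiL : i ∉ L := fun hh => hi (by simp [hT, hh, hiC])
    have hip : i ∉ p.edges.map c := fun hh => hiL (by
      rw [hL, hq, SimpleGraph.Walk.edges_cons, List.map_cons]
      exact List.mem_cons_of_mem _ hh)
    have key : ∀ u ∈ S ∪ p.support.toFinset, (G.deleteEdges {e | c e = i}).Reachable u b := by
      intro u hu
      rw [Finset.mem_union, List.mem_toFinset] at hu
      rcases hu with hu | hu
      · exact h.reachable i hiC u hu b hb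
      · refine reachable_of_notMem (p.dropUntil u hu) fun hh => hip ?_
        rw [List.mem_map] at hh ⊢
        obtain ⟨e, he, rfl⟩ := hh
        exact ⟨e, p.edges_dropUntil_subset_edges hu he, rfl⟩
    exact fun u hu v hv => (key u hu).trans (key v hv).symm

theorem IsEarStage.exists_univ [Fintype V] (hc : isMDColoring G c) (hG : G.Connected)
    (h2 : ∀ v : V, (G.induce ({v}ᶜ : Set V)).Connected) {S : Finset V} {C : Finset ℕ}
    (h : IsEarStage G c S C) : ∃ C', IsEarStage G c Finset.univ C' := by
  by_cases hne : (S : Set V) = Set.univ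
  · rw [Finset.coe_eq_univ] at hne
    exact ⟨C, hne ▸ h⟩
  · obtain ⟨S', C', hlt, h'⟩ := h.extend hc hG h2 hne
    exact h'.exists_univ hc hG h2
  termination_by Fintype.card V - S.card
  decreasing_by
    have := S'.card_le_univ
    omega

theorem isEarStage_edge [DecidableEq V] {u v : V} (h : G.Adj u v) :
    IsEarStage G c {u, v} {c s(u, v)} := by
  refine ⟨by rw [Finset.card_pair h.ne], by rw [Finset.card_pair h.ne]; simp, ?_⟩
  intro i hi
  rw [Finset.mem_singleton] at hi
  have huv : (G.deleteEdges {e | c e = i}).Reachable u v :=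
    SimpleGraph.Adj.reachable (by simp [SimpleGraph.deleteEdges_adj, h, Ne.symm hi])
  simp only [Finset.mem_insert, Finset.mem_singleton]
  rintro a (rfl | rfl) b (rfl | rfl)
  exacts [.rfl, huv, huv.symm, .rfl]

end

theorem twoConnected_md {V : Type*} [Fintype V] (G : SimpleGraph V)
    (hG : G.Connected)
    (h2 : ∀ v : V, (G.induce ({v}ᶜ : Set V)).Connected) :
    mdNum G ≤ Fintype.card V / 2 := by
  classical
  refine csSup_le' ?_
  rintro n ⟨c, hc, rfl⟩
  obtain ⟨v⟩ := hG.nonempty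
  -- `G - v` is connected, hence nonempty, so there is a second vertex and thus an edge at `v`.
  obtain ⟨⟨w, hw⟩⟩ := (h2 v).nonempty
  have : Nontrivial V := ⟨w, v, hw⟩
  obtain ⟨u, hu⟩ := hG.preconnected.exists_adj_of_nontrivial v
  obtain ⟨C, hC⟩ := (isEarStage_edge (c := c) hu).exists_univ hc hG h2
  have hsub : c '' G.edgeSet ⊆ (C : Set ℕ) := by
    rintro _ ⟨e, he, rfl⟩
    induction e with | _ a b =>
    by_contra hab
    exact hc.not_reachable_of_adj he (hC.reachable _ hab a (Finset.mem_univ _) b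
      (Finset.mem_univ _))
  have h3 := Set.ncard_le_ncard hsub C.finite_toSet
  rw [Set.ncard_coe_finset] at h3
  have h4 := hC.card_le
  rw [Finset.card_univ] at h4
  omega
end

section
/- For any two connected graphs G and H, the Cartesian product satisfies md(G □ H) = md(G) + md(H). -/
/-- A vertex map sending each edge of `A` into a connected component of `B` preserves
reachability. -/
theorem projection_reachable {V W : Type*} {A : SimpleGraph V} {B : SimpleGraph W} (f : V → W)
    (h : ∀ a b, A.Adj a b → B.Reachable (f a) (f b)) {x y : V} (hxy : A.Reachable x y) :
    B.Reachable (f x) (f y) := by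
  obtain ⟨p⟩ := hxy
  induction p with
  | nil => exact SimpleGraph.Reachable.refl _
  | cons hab _ ih => exact (h _ _ hab).trans ih

theorem reachable_deleteEdges {V : Type*} {K : SimpleGraph V} {c : Sym2 V → ℕ} {i : ℕ} {x y : V}
    (h : K.Adj x y) (hc : c s(x, y) ≠ i) :
    (K.deleteEdges {e | c e = i}).Reachable x y := by
  apply SimpleGraph.Adj.reachable
  simp [SimpleGraph.deleteEdges_adj, h, hc]

theorem isMDColoring_comp {V W : Type*} {A : SimpleGraph V} {B : SimpleGraph W} (f : V → W)
    (hf : Function.Injective f) (hadj : ∀ a b, A.Adj a b → B.Adj (f a) (f b)) {c : Sym2 W → ℕ}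
    (hc : isMDColoring B c) : isMDColoring A (fun e => c (e.map f)) := by
  intro u v huv
  obtain ⟨i, hi⟩ := hc (f u) (f v) (hf.ne huv)
  refine ⟨i, fun h => hi (projection_reachable f ?_ h)⟩
  intro a b hab
  simp only [SimpleGraph.deleteEdges_adj, Set.mem_ofPred_eq, Sym2.map_mk] at hab
  exact reachable_deleteEdges (hadj a b hab.1) hab.2

/-- Opposite edges of a 4-cycle have the same color: each diagonal pair forces a color common to
both paths joining it, and each edge forces its own color to recur on the rest of the cycle. -/
theorem square_color {V : Type*} {K : SimpleGraph V} {c : Sym2 V → ℕ} (hc : isMDColoring K c)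
    {x y z t : V} (hxy : K.Adj x y) (hyz : K.Adj y z) (hzt : K.Adj z t) (htx : K.Adj t x)
    (hxz : x ≠ z) (hyt : y ≠ t) : c s(x, y) = c s(z, t) := by
  have path2 : ∀ {i : ℕ} {p q r : V}, K.Adj p q → K.Adj q r →
      ¬ (K.deleteEdges {e | c e = i}).Reachable p r → c s(p, q) = i ∨ c s(q, r) = i := by
    intro i p q r h1 h2 h
    by_contra! hn
    exact h ((reachable_deleteEdges h1 hn.1).trans (reachable_deleteEdges h2 hn.2))
  have edge : ∀ {p q r s : V}, K.Adj p q → K.Adj q r → K.Adj r s → K.Adj s p →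
      c s(q, r) = c s(p, q) ∨ c s(r, s) = c s(p, q) ∨ c s(s, p) = c s(p, q) := by
    intro p q r s h1 h2 h3 h4
    obtain ⟨i, hi⟩ := hc p q h1.ne
    have e1 : c s(p, q) = i := by
      by_contra hn
      exact hi (reachable_deleteEdges h1 hn)
    by_contra! hn
    rw [e1] at hn
    exact hi (((reachable_deleteEdges h2 hn.1).trans ((reachable_deleteEdges h3 hn.2.1).trans
      (reachable_deleteEdges h4 hn.2.2))).symm)
  obtain ⟨i, hi⟩ := hc x z hxz
  obtain ⟨j, hj⟩ := hc y t hyt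
  have a1 := path2 hxy hyz hi
  have a2 := path2 hzt htx (fun h => hi h.symm)
  have b1 := path2 hyz hzt hj
  have b2 := path2 htx hxy (fun h => hj h.symm)
  have e1 := edge hxy hyz hzt htx
  have e3 := edge hzt htx hxy hyz
  omega

theorem md_bddAbove {V : Type*} [Finite V] (G : SimpleGraph V) :
    BddAbove {n | ∃ c : Sym2 V → ℕ, isMDColoring G c ∧ (c '' G.edgeSet).ncard = n} := by
  refine ⟨G.edgeSet.ncard, ?_⟩
  rintro n ⟨c, -, rfl⟩
  exact Set.ncard_image_le (Set.toFinite _)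

theorem le_mdNum {V : Type*} [Finite V] {G : SimpleGraph V} {c : Sym2 V → ℕ}
    (hc : isMDColoring G c) : (c '' G.edgeSet).ncard ≤ mdNum G :=
  le_csSup (md_bddAbove G) ⟨c, hc, rfl⟩

/-- The supremum is attained: the constant coloring shows that it is taken over a nonempty set. -/
theorem exists_mdNum {V : Type*} [Finite V] (G : SimpleGraph V) :
    ∃ c : Sym2 V → ℕ, isMDColoring G c ∧ (c '' G.edgeSet).ncard = mdNum G := by
  suffices h0 : isMDColoring G (fun _ => 0) from
    Nat.sSup_mem (s := {n | ∃ c : Sym2 V → ℕ, isMDColoring G c ∧ (c '' G.edgeSet).ncard = n})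
      ⟨_, fun _ => 0, h0, rfl⟩ (md_bddAbove G)
  intro u v huv
  refine ⟨0, fun h => huv ?_⟩
  have hb : G.deleteEdges {_e | (0 : ℕ) = 0} = ⊥ := by
    ext a b
    simp
  rw [hb] at h
  exact SimpleGraph.reachable_bot.mp h

open Classical in
/-- The coloring of `G □ H` by `c` on `G`-edges and `d` on `H`-edges (those constant in the first
coordinate), made disjoint by using even colors for `c` and odd colors for `d`. -/
noncomputable def prodColoring {V W : Type*} (c : Sym2 V → ℕ) (d : Sym2 W → ℕ) :
    Sym2 (V × W) → ℕ := fun e =>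
  if (e.map Prod.fst).IsDiag then 2 * d (e.map Prod.snd) + 1 else 2 * c (e.map Prod.fst)

theorem prodColoring_right {V W : Type*} (c : Sym2 V → ℕ) (d : Sym2 W → ℕ) (a : V) (b b' : W) :
    prodColoring c d s((a, b), (a, b')) = 2 * d s(b, b') + 1 :=
  if_pos (Sym2.mk_isDiag_iff.mpr rfl)

theorem prodColoring_left {V W : Type*} (c : Sym2 V → ℕ) (d : Sym2 W → ℕ) {a a' : V}
    (h : a ≠ a') (b b' : W) :
    prodColoring c d s((a, b), (a', b')) = 2 * c s(a, a') :=
  if_neg (fun hd => h (Sym2.mk_isDiag_iff.mp hd))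

theorem prodColoring_isMD {V W : Type*} {G : SimpleGraph V} {H : SimpleGraph W}
    {c : Sym2 V → ℕ} {d : Sym2 W → ℕ} (hc : isMDColoring G c) (hd : isMDColoring H d) :
    isMDColoring (G.boxProd H) (prodColoring c d) := by
  rintro ⟨u, w⟩ ⟨u', w'⟩ hne
  by_cases hu : u = u'
  · have hw : w ≠ w' := fun h => hne (by rw [hu, h])
    obtain ⟨i, hi⟩ := hd w w' hw
    refine ⟨2 * i + 1, fun h => hi (projection_reachable Prod.snd ?_ h)⟩
    rintro ⟨a, b⟩ ⟨a', b'⟩ hab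
    simp only [SimpleGraph.deleteEdges_adj, SimpleGraph.boxProd_adj, Set.mem_ofPred_eq] at hab
    obtain ⟨⟨-, hbb⟩ | ⟨hbb, haa⟩, hcol⟩ := hab
    · rw [hbb]
    · obtain rfl : a = a' := haa
      rw [prodColoring_right] at hcol
      exact reachable_deleteEdges hbb (fun h => hcol (congrArg (fun n => 2 * n + 1) h))
  · obtain ⟨i, hi⟩ := hc u u' hu
    refine ⟨2 * i, fun h => hi (projection_reachable Prod.fst ?_ h)⟩
    rintro ⟨a, b⟩ ⟨a', b'⟩ hab
    simp only [SimpleGraph.deleteEdges_adj, SimpleGraph.boxProd_adj, Set.mem_ofPred_eq] at hab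
    obtain ⟨⟨haa, -⟩ | ⟨-, haa⟩, hcol⟩ := hab
    · rw [prodColoring_left c d haa.ne] at hcol
      exact reachable_deleteEdges haa (fun h => hcol (congrArg (fun n => 2 * n) h))
    · rw [haa]

theorem mdNum_add_le {V W : Type*} [Finite V] [Finite W] [Nonempty V] [Nonempty W]
    (G : SimpleGraph V) (H : SimpleGraph W) :
    mdNum G + mdNum H ≤ mdNum (G.boxProd H) := by
  obtain ⟨c, hc, hcn⟩ := exists_mdNum G
  obtain ⟨d, hd, hdn⟩ := exists_mdNum H
  obtain ⟨v₀⟩ := ‹Nonempty V›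
  obtain ⟨w₀⟩ := ‹Nonempty W›
  refine le_trans ?_ (le_mdNum (prodColoring_isMD hc hd))
  have h1 : ((fun n => 2 * n) '' (c '' G.edgeSet)).ncard = mdNum G := by
    rw [Set.ncard_image_of_injective _ (fun a b h => by simpa using h), hcn]
  have h2 : ((fun n => 2 * n + 1) '' (d '' H.edgeSet)).ncard = mdNum H := by
    rw [Set.ncard_image_of_injective _ (fun a b h => by simpa using h), hdn]
  rw [← h1, ← h2, ← Set.ncard_union_eq _ (Set.toFinite _) (Set.toFinite _)]
  · refine Set.ncard_le_ncard ?_ (Set.toFinite _)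
    rintro n (⟨_, ⟨e, he, rfl⟩, rfl⟩ | ⟨_, ⟨e, he, rfl⟩, rfl⟩)
    · induction e with | _ a b =>
      rw [SimpleGraph.mem_edgeSet] at he
      refine ⟨s((a, w₀), (b, w₀)), ?_, ?_⟩
      · simp [he]
      · simp [prodColoring_left c d he.ne]
    · induction e with | _ a b =>
      rw [SimpleGraph.mem_edgeSet] at he
      refine ⟨s((v₀, a), (v₀, b)), ?_, ?_⟩
      · simp [he]
      · simp [prodColoring_right]
  · rw [Set.disjoint_left]
    rintro n ⟨a, -, rfl⟩ ⟨b, -, hb⟩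
    simp only at hb
    omega

theorem color_left {V W : Type*} {G : SimpleGraph V} {H : SimpleGraph W} (hH : H.Connected)
    {c : Sym2 (V × W) → ℕ} (hc : isMDColoring (G.boxProd H) c) {a b : V} (hab : G.Adj a b)
    (w w' : W) : c s((a, w), (b, w)) = c s((a, w'), (b, w')) := by
  obtain ⟨p⟩ := hH.preconnected w w'
  induction p with
  | nil => rfl
  | @cons x y _ hxy _ ih =>
    rw [← ih, Sym2.eq_swap (a := (a, y))]
    refine square_color hc ?_ ?_ ?_ ?_ ?_ ?_ <;>
      simp [SimpleGraph.boxProd_adj, hab, hab.symm, hxy, hxy.symm, hab.ne, hab.ne']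

theorem color_right {V W : Type*} {G : SimpleGraph V} {H : SimpleGraph W} (hG : G.Connected)
    {c : Sym2 (V × W) → ℕ} (hc : isMDColoring (G.boxProd H) c) {a b : W} (hab : H.Adj a b)
    (v v' : V) : c s((v, a), (v, b)) = c s((v', a), (v', b)) := by
  obtain ⟨p⟩ := hG.preconnected v v'
  induction p with
  | nil => rfl
  | @cons x y _ hxy _ ih =>
    rw [← ih, Sym2.eq_swap (a := (y, a))]
    refine square_color hc ?_ ?_ ?_ ?_ ?_ ?_ <;>
      simp [SimpleGraph.boxProd_adj, hab, hab.symm, hxy, hxy.symm, hab.ne, hab.ne']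

theorem mdNum_le_add {V W : Type*} [Finite V] [Finite W]
    {G : SimpleGraph V} {H : SimpleGraph W} (hG : G.Connected) (hH : H.Connected) :
    mdNum (G.boxProd H) ≤ mdNum G + mdNum H := by
  obtain ⟨c, hc, hcn⟩ := exists_mdNum (G.boxProd H)
  obtain ⟨v₀⟩ := hG.nonempty
  obtain ⟨w₀⟩ := hH.nonempty
  have h1 := le_mdNum (isMDColoring_comp (A := G) (fun v => (v, w₀))
    (fun a b h => (Prod.mk.inj h).1) (fun a b h => by simp [h]) hc)
  have h2 := le_mdNum (isMDColoring_comp (A := H) (fun w => (v₀, w))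
    (fun a b h => (Prod.mk.inj h).2) (fun a b h => by simp [h]) hc)
  rw [← hcn]
  refine le_trans ?_ (add_le_add h1 h2)
  refine le_trans (Set.ncard_le_ncard ?_ (Set.toFinite _)) (Set.ncard_union_le _ _)
  rintro n ⟨e, he, rfl⟩
  induction e with | _ x y =>
  obtain ⟨a, w⟩ := x
  obtain ⟨b, w'⟩ := y
  rw [SimpleGraph.mem_edgeSet, SimpleGraph.boxProd_adj] at he
  obtain ⟨hab, hw⟩ | ⟨hab, hv⟩ := he
  · obtain rfl : w = w' := hw
    exact Or.inl ⟨s(a, b), hab, color_left hH hc hab w₀ w⟩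
  · obtain rfl : a = b := hv
    exact Or.inr ⟨s(w, w'), hab, color_right hG hc hab v₀ a⟩

theorem boxProd_md {V W : Type*} [Fintype V] [Fintype W]
    (G : SimpleGraph V) (H : SimpleGraph W) (hG : G.Connected) (hH : H.Connected) :
    mdNum (G.boxProd H) = mdNum G + mdNum H := by
  have := hG.nonempty
  have := hH.nonempty
  exact le_antisymm (mdNum_le_add hG hH) (mdNum_add_le G H)
end
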